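/- For every f ∈ S(ℝ) and every (φ, ψ) ∈ ℝ², one has Φ(x·f)(φ, ψ) = φ·Φf(φ, ψ) − i(θ/(2π))·(∂Φf/∂ψ)(φ, ψ); that is, the map Φ intertwines the operator of multiplication by the coordinate x on S(ℝ) with the operator −i(θ/2π)∂/∂ψ + φ on functions on ℝ². -/

import Mathlib

open Complex SchwartzMap

/-- The transform `Φf(φ, ψ) = Σ_{n ∈ ℤ} f(φ + θn) · exp(2πi n ψ)`. -/
noncomputable def Phi (θ : ℝ) (f : SchwartzMap ℝ ℂ) : ℝ × ℝ → ℂ :=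
  fun p => ∑' n : ℤ, f (p.1 + θ * n) * Complex.exp (2 * Real.pi * Complex.I * n * p.2)

theorem aux_summable (θ : ℝ) (hθ0 : 0 < θ) (g : SchwartzMap ℝ ℂ) (φ : ℝ) :
    Summable fun n : ℤ => ‖g (φ + θ * n)‖ := by
  obtain ⟨C, hC0, hC⟩ := g.decay 2 0
  have hs : Summable fun n : ℤ => (C / θ ^ 2) * (1 / |(n : ℝ) + φ / θ| ^ (2 : ℝ)) :=
    ((Real.summable_one_div_int_add_rpow (φ / θ) 2).2 (by norm_num)).mul_left _
  refine Summable.of_norm_bounded_eventually hs ?_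
  have hfin : {n : ℤ | φ + θ * n = 0}.Finite := by
    apply Set.Subsingleton.finite
    intro a ha b hb
    simp only [Set.mem_ofPred_eq] at ha hb
    have : θ * (a : ℝ) = θ * b := by linarith
    exact_mod_cast mul_left_cancel₀ hθ0.ne' this
  refine hfin.subset ?_
  intro n hn
  by_contra h0
  apply hn
  simp only [Set.mem_ofPred_eq] at h0 ⊢
  have h := hC (φ + θ * n)
  rw [norm_iteratedFDeriv_zero, Real.norm_eq_abs, sq_abs] at h
  rw [norm_norm]
  have hx : 0 < (φ + θ * n) ^ 2 := by positivity
  have e : (C / θ ^ 2) * (1 / |(n : ℝ) + φ / θ| ^ (2 : ℝ)) = C / (φ + θ * n) ^ 2 := by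
    rw [Real.rpow_two, sq_abs, div_mul_div_comm, mul_one, ← mul_pow]
    congr 2
    field_simp
    ring
  rw [e, le_div_iff₀ hx]
  linarith

theorem aux_norm_exp (n : ℤ) (t : ℝ) :
    ‖Complex.exp (2 * Real.pi * Complex.I * n * t)‖ = 1 := by
  have : (2 * Real.pi * Complex.I * n * t : ℂ) = ((2 * Real.pi * n * t : ℝ) : ℂ) * Complex.I := by
    push_cast; ring
  rw [this, Complex.norm_exp_ofReal_mul_I]

theorem stmt5 (θ : ℝ) (hθ0 : 0 < θ) (hθ1 : θ ≤ 1) (f xf : SchwartzMap ℝ ℂ)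
    (hxf : ∀ x : ℝ, xf x = (x : ℂ) * f x) :
    ∀ φ ψ : ℝ, Phi θ xf (φ, ψ)
      = (φ : ℂ) * Phi θ f (φ, ψ)
        - Complex.I * ((θ : ℂ) / (2 * Real.pi)) * deriv (fun t : ℝ => Phi θ f (φ, t)) ψ := by
  intro φ ψ
  have hθ : (θ : ℂ) ≠ 0 := by exact_mod_cast hθ0.ne'
  have hpi : (Real.pi : ℂ) ≠ 0 := by exact_mod_cast Real.pi_ne_zero
  have hsf := aux_summable θ hθ0 f φ
  have hsx := aux_summable θ hθ0 xf φ
  have key : ∀ n : ℤ, (n : ℂ) * f (φ + θ * n)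
      = (xf (φ + θ * n) - φ * f (φ + θ * n)) / θ := by
    intro n
    rw [hxf]; push_cast; field_simp; ring
  have hu : Summable fun n : ℤ => (2 * Real.pi / θ) *
      (‖xf (φ + θ * n)‖ + |φ| * ‖f (φ + θ * n)‖) :=
    (hsx.add (hsf.mul_left _)).mul_left _
  have hS : ∀ (g : SchwartzMap ℝ ℂ) (t : ℝ), Summable fun n : ℤ =>
      g (φ + θ * n) * Complex.exp (2 * Real.pi * Complex.I * n * t) := by
    intro g t
    refine Summable.of_norm_bounded (aux_summable θ hθ0 g φ) fun n => ?_
    rw [norm_mul, aux_norm_exp, mul_one]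
  have hd : HasDerivAt (fun t : ℝ => Phi θ f (φ, t))
      (∑' n : ℤ, (2 * Real.pi * Complex.I / θ) *
        ((xf (φ + θ * n) - φ * f (φ + θ * n)) *
          Complex.exp (2 * Real.pi * Complex.I * n * ψ))) ψ := by
    refine hasDerivAt_tsum (𝕜 := ℝ) (y₀ := ψ) (g := fun (n : ℤ) (t : ℝ) =>
      f (φ + θ * n) * Complex.exp (2 * Real.pi * Complex.I * n * t))
      (g' := fun (n : ℤ) (t : ℝ) => (2 * Real.pi * Complex.I / θ) *
        ((xf (φ + θ * n) - φ * f (φ + θ * n)) *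
          Complex.exp (2 * Real.pi * Complex.I * n * t))) hu ?_ ?_ (hS f ψ) ψ
    · intro n t
      have h1 : HasDerivAt (fun t : ℝ => (2 * Real.pi * Complex.I * n * t : ℂ))
          (2 * Real.pi * Complex.I * n * 1) t :=
        (Complex.ofRealCLM.hasDerivAt (x := t)).const_mul _
      have h2 := (h1.cexp).const_mul (f (φ + θ * n))
      refine h2.congr_deriv ?_
      have k := key n
      rw [eq_div_iff hθ] at k
      rw [← k]
      field_simp
    · intro n t
      rw [norm_mul, norm_mul, aux_norm_exp, mul_one]
      have e : ‖(2 * Real.pi * Complex.I / θ : ℂ)‖ = 2 * Real.pi / θ := by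
        simp [abs_of_pos hθ0, abs_of_pos Real.pi_pos]
      rw [e]
      have := norm_sub_le (xf (φ + θ * n)) (φ * f (φ + θ * n))
      rw [norm_mul, Complex.norm_real, Real.norm_eq_abs] at this
      gcongr
  rw [hd.deriv, tsum_mul_left]
  have e2 : ∑' n : ℤ, ((xf (φ + θ * n) - φ * f (φ + θ * n)) *
          Complex.exp (2 * Real.pi * Complex.I * n * ψ))
      = Phi θ xf (φ, ψ) - φ * Phi θ f (φ, ψ) := by
    unfold Phi
    rw [← tsum_mul_left, ← Summable.tsum_sub (hS xf ψ) ((hS f ψ).mul_left _)]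
    congr 1
    ext n
    ring
  rw [e2]
  have e3 : Complex.I * ((θ : ℂ) / (2 * Real.pi)) * (2 * Real.pi * Complex.I / θ *
      (Phi θ xf (φ, ψ) - φ * Phi θ f (φ, ψ))) = Complex.I ^ 2 *
      (Phi θ xf (φ, ψ) - φ * Phi θ f (φ, ψ)) := by
    field_simp
  rw [e3, Complex.I_sq]
  ring
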